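/- arXiv:1602.00848 — 2 statements merged into one kernel-verified Lean document; each statement's English description precedes it below -/
import Mathlib

section
/- Let K be a field with a discrete valuation val, valuation ring O_K, and uniformizer π. Let s < δ be positive integers, let M ∈ M_{δ×s}(K) be a matrix of full rank s, let v ∈ K^δ, and let M' ∈ M_{δ×(s+1)}(K) be the matrix obtained from M by adjoining v as an (s+1)-th column. Assume M' has full rank s+1. Then cond(M) ≤ cond(M'), i.e. the largest valuation of an invariant factor of M is at most the largest valuation of an invariant factor of M'. -/
/-! An integral inverse turns the factorization `M' = P' Δ' Q'` into a left inverse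
`L' = Q'⁻¹ Δ'⁺ P'⁻¹` of `M'` whose entries all have valuation at least `-b_{s+1}`. Because `M` is the
submatrix of the first `s` columns of `M'`, the first `s` rows of `L'` form a left inverse `L` of
`M`. From `L P Δ Q = 1` follows `(Q L P) Δ = 1`, whose last diagonal entry says that
`π ^ a_s` is inverse to an entry of `Q L P`, and this entry has valuation at least `-b_{s+1}`;
hence `-a_s ≥ -b_{s+1}`. Integrality of the inverses comes from the adjugate
(`val_inv_nonneg`), and the valuations of products are bounded by `le_val_mul_apply`. -/

/-- The diagonal matrix of a Smith normal form: diagonal entries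
`π ^ a 0, …, π ^ a (s-1), 0, …, 0`. -/
def snfDiag {K : Type} [Field K] (π : K) (n m s : ℕ) (a : ℕ → ℤ) :
    Matrix (Fin n) (Fin m) K :=
  fun i j => if (i : ℕ) = (j : ℕ) ∧ (i : ℕ) < s then π ^ a (i : ℕ) else 0

lemma val_uniformizer_zpow {K : Type} [Field K] (val : AddValuation K (WithTop ℤ))
    (π : K) (hπ : val π = 1) (n : ℤ) : val (π ^ n) = (n : WithTop ℤ) := by
  have h_nat : ∀ k : ℕ, val (π ^ k) = ((k : ℤ) : WithTop ℤ) := by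
    intro k
    rw [AddValuation.map_pow, hπ]
    simp
  obtain ⟨k, rfl | rfl⟩ := n.eq_nat_or_neg
  · rw [zpow_natCast, h_nat]
  · rw [zpow_neg, zpow_natCast, AddValuation.map_inv, h_nat]
    rfl

lemma le_val_mul_apply {K : Type} [Field K] (val : AddValuation K (WithTop ℤ))
    {l m n : ℕ} {A : Matrix (Fin l) (Fin m) K} {B : Matrix (Fin m) (Fin n) K}
    {c d : WithTop ℤ} (hA : ∀ i j, c ≤ val (A i j)) (hB : ∀ i j, d ≤ val (B i j))
    (i : Fin l) (j : Fin n) : c + d ≤ val ((A * B) i j) := by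
  rw [Matrix.mul_apply]
  refine AddValuation.map_le_sum val fun k _ => ?_
  rw [AddValuation.map_mul]
  exact add_le_add (hA i k) (hB k j)

lemma val_det_nonneg {K : Type} [Field K] (val : AddValuation K (WithTop ℤ))
    {n : ℕ} {A : Matrix (Fin n) (Fin n) K} (hA : ∀ i j, 0 ≤ val (A i j)) :
    0 ≤ val A.det := by
  have h_prod : ∀ (t : Finset (Fin n)) (f : Fin n → K), (∀ i, 0 ≤ val (f i)) →
      0 ≤ val (∏ i ∈ t, f i) := by
    intro t f hf
    refine Finset.prod_induction f (fun x => 0 ≤ val x) ?_ (by simp) (fun i _ => hf i)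
    intro x y hx hy
    rw [AddValuation.map_mul]
    exact add_nonneg hx hy
  rw [Matrix.det_apply]
  refine AddValuation.map_le_sum val fun σ _ => ?_
  have h := h_prod Finset.univ (fun i => A (σ i) i) fun i => hA _ _
  rcases Int.units_eq_one_or (Equiv.Perm.sign σ) with hσ | hσ
  · simpa [hσ] using h
  · simpa [hσ, AddValuation.map_neg] using h

/-- A matrix over the valuation ring with unit determinant has its inverse over that ring. -/
lemma val_inv_nonneg {K : Type} [Field K] (val : AddValuation K (WithTop ℤ))
    {n : ℕ} {A : Matrix (Fin n) (Fin n) K} (hA : ∀ i j, 0 ≤ val (A i j))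
    (hdet : val A.det = 0) (i j : Fin n) : 0 ≤ val (A⁻¹ i j) := by
  rw [Matrix.inv_def, Matrix.smul_apply, Ring.inverse_eq_inv', smul_eq_mul,
    AddValuation.map_mul, AddValuation.map_inv, hdet, Matrix.adjugate_apply, neg_zero, zero_add]
  refine val_det_nonneg val fun k l => ?_
  rw [Matrix.updateRow_apply]
  split_ifs with hk
  · rcases eq_or_ne l i with rfl | hl
    · simp
    · simp [hl]
  · exact hA k l

lemma isUnit_det_of_val_eq_zero {K : Type} [Field K] (val : AddValuation K (WithTop ℤ))
    {n : ℕ} {A : Matrix (Fin n) (Fin n) K} (hdet : val A.det = 0) : IsUnit A.det := by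
  rw [isUnit_iff_ne_zero]
  intro h
  simp [h] at hdet

/-- The diagonal matrix of inverses `π ^ (-b i)` is a left inverse of the Smith diagonal matrix. -/
lemma snfDiag_neg_mul_snfDiag {K : Type} [Field K] {π : K} (hπ : π ≠ 0) {n m : ℕ} (h : m ≤ n)
    (b : ℕ → ℤ) : snfDiag π m n m (fun i => -b i) * snfDiag π n m m b = 1 := by
  ext i j
  rw [Matrix.mul_apply, Finset.sum_eq_single (Fin.castLE h i)]
  · by_cases hij : i = j
    · subst hij
      simp [snfDiag, inv_mul_cancel₀ (zpow_ne_zero _ hπ)]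
    · have : (i : ℕ) ≠ j := fun e => hij (Fin.ext e)
      simp [snfDiag, this, hij]
  · intro k _ hk
    have : (i : ℕ) ≠ k := fun e => hk (Fin.ext e.symm)
    simp [snfDiag, this]
  · simp

/-- Let `M ∈ M_{δ×s}(K)` be of full rank `s < δ`, and let `M'` be obtained from
`M` by adjoining a vector `v` as an `(s+1)`-th column; assume `M'` has full rank
`s+1`.  If `a_1 ≤ ⋯ ≤ a_s` are the invariant factors of `M` and
`b_1 ≤ ⋯ ≤ b_{s+1}` those of `M'` (both witnessed by SNF factorizations with
`P`'s and `Q`'s invertible over `O_K`), then `cond M = a_s` is at most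
`cond M' = b_{s+1}`. -/
theorem cond_le_cond_of_adjoin_column {K : Type} [Field K]
    (val : AddValuation K (WithTop ℤ)) (hval : Function.Surjective val)
    (π : K) (hπ : val π = 1)
    {δ s : ℕ} (hs : 0 < s) (hsδ : s < δ)
    (M : Matrix (Fin δ) (Fin s) K) (v : Fin δ → K)
    (M' : Matrix (Fin δ) (Fin (s + 1)) K)
    (hM'cast : ∀ (i : Fin δ) (j : Fin s), M' i (Fin.castSucc j) = M i j)
    (hM'last : ∀ i : Fin δ, M' i (Fin.last s) = v i)
    (P : Matrix (Fin δ) (Fin δ) K) (Q : Matrix (Fin s) (Fin s) K)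
    (P' : Matrix (Fin δ) (Fin δ) K) (Q' : Matrix (Fin (s + 1)) (Fin (s + 1)) K)
    (a b : ℕ → ℤ)
    (hP : ∀ i j, 0 ≤ val (P i j)) (hPdet : val P.det = 0)
    (hQ : ∀ i j, 0 ≤ val (Q i j)) (hQdet : val Q.det = 0)
    (hP' : ∀ i j, 0 ≤ val (P' i j)) (hP'det : val P'.det = 0)
    (hQ' : ∀ i j, 0 ≤ val (Q' i j)) (hQ'det : val Q'.det = 0)
    (ha : ∀ i j : ℕ, i ≤ j → j < s → a i ≤ a j)
    (hb : ∀ i j : ℕ, i ≤ j → j < s + 1 → b i ≤ b j)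
    (hM : M = P * snfDiag π δ s s a * Q)
    (hM' : M' = P' * snfDiag π δ (s + 1) (s + 1) b * Q') :
    a (s - 1) ≤ b s := by
  have hπ0 : π ≠ 0 := by
    rintro rfl
    rw [AddValuation.map_zero] at hπ
    exact absurd hπ (by decide)
  have hP'u := isUnit_det_of_val_eq_zero val hP'det
  have hQ'u := isUnit_det_of_val_eq_zero val hQ'det
  set D' := snfDiag π (s + 1) δ (s + 1) (fun i => -b i) with hD'
  set L' := Q'⁻¹ * D' * P'⁻¹ with hL'
  have hL'M' : L' * M' = 1 := by
    have h := snfDiag_neg_mul_snfDiag hπ0 (Nat.succ_le_of_lt hsδ) b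
    calc L' * M' = Q'⁻¹ * (D' * ((P'⁻¹ * P') * snfDiag π δ (s + 1) (s + 1) b)) * Q' := by
          rw [hL', hM']; simp only [Matrix.mul_assoc]
      _ = 1 := by
          rw [Matrix.nonsing_inv_mul _ hP'u, Matrix.one_mul, h, Matrix.mul_one,
            Matrix.nonsing_inv_mul _ hQ'u]
  have hD'val : ∀ i j, ((-b s : ℤ) : WithTop ℤ) ≤ val (D' i j) := by
    intro i j
    rw [hD']
    unfold snfDiag
    split_ifs
    · rw [val_uniformizer_zpow val π hπ]
      exact WithTop.coe_le_coe.2 (neg_le_neg (hb i s (Nat.lt_succ_iff.1 i.2) (Nat.lt_succ_self s)))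
    · simp
  have hL'val : ∀ i j, ((-b s : ℤ) : WithTop ℤ) ≤ val (L' i j) := by
    intro i j
    have h := le_val_mul_apply val
      (le_val_mul_apply val (val_inv_nonneg val hQ' hQ'det) hD'val)
      (val_inv_nonneg val hP' hP'det) i j
    simpa using h
  set L : Matrix (Fin s) (Fin δ) K := L'.submatrix Fin.castSucc id with hL
  have hLM : L * M = 1 := by
    ext i j
    have h := congrFun (congrFun hL'M' i.castSucc) j.castSucc
    rw [Matrix.mul_apply] at h ⊢
    simp only [hM'cast] at h
    simpa [hL, Matrix.one_apply] using h
  have hone : Q * L * P * snfDiag π δ s s a = 1 := by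
    -- For square matrices a left inverse is a right inverse, so `Q` can be moved to the front.
    have h : (L * P * snfDiag π δ s s a) * Q = 1 := by
      rw [← hLM, hM]; simp only [Matrix.mul_assoc]
    have h' := mul_eq_one_comm.1 h
    simpa only [Matrix.mul_assoc] using h'
  have hval : ∀ i j, ((-b s : ℤ) : WithTop ℤ) ≤ val ((Q * L * P) i j) := by
    intro i j
    have h := le_val_mul_apply val
      (le_val_mul_apply val hQ (B := L) (fun k l => hL'val k.castSucc l)) hP i j
    simpa using h
  let e : Fin s := ⟨s - 1, Nat.sub_lt hs Nat.one_pos⟩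
  let f : Fin δ := ⟨s - 1, lt_of_le_of_lt (Nat.sub_le s 1) hsδ⟩
  have hef : (Q * L * P) e f * π ^ a (s - 1) = 1 := by
    have h := congrFun (congrFun hone e) e
    rw [Matrix.mul_apply, Finset.sum_eq_single f] at h
    · simpa [snfDiag, e, f, hs] using h
    · intro k _ hk
      have : (k : ℕ) ≠ s - 1 := fun h => hk (Fin.ext h)
      simp [snfDiag, e, this]
    · simp
  have hsum := congrArg val hef
  rw [AddValuation.map_mul, val_uniformizer_zpow val π hπ, AddValuation.map_one] at hsum
  have hle : ((-b s : ℤ) : WithTop ℤ) + (a (s - 1) : WithTop ℤ) ≤ 0 :=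
    hsum ▸ add_le_add_left (hval e f) _
  have hle' : -b s + a (s - 1) ≤ 0 := by exact_mod_cast hle
  linarith
end

section
/- Let K be a field with a discrete valuation val, valuation ring O_K, and uniformizer π. Let M ∈ M_n(O_K) be invertible over K with c = cond(M), and let l > 2c. Let E ∈ M_n(K) have all entries of valuation at least l, and let Y, Y' ∈ O_K^n be vectors with val(Y_i − Y'_i) ≥ l for every i. Then M + E is invertible, and the solutions X = M^{-1}Y and X' = (M+E)^{-1}Y' of the systems MX = Y and (M+E)X' = Y' satisfy val(X_i − X'_i) ≥ l − 2c for every i. -/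
section Aux

variable {K : Type} [Field K] (val : AddValuation K (WithTop ℤ)) {n : ℕ}

lemma le_mul_of_le {x y : K} {p q : WithTop ℤ} (hx : p ≤ val x) (hy : q ≤ val y) :
    p + q ≤ val (x * y) := by
  rw [val.map_mul]; exact add_le_add hx hy

lemma le_matrix_mul {A B : Matrix (Fin n) (Fin n) K} {p q : WithTop ℤ}
    (hA : ∀ i j, p ≤ val (A i j)) (hB : ∀ i j, q ≤ val (B i j)) (i j : Fin n) :
    p + q ≤ val ((A * B) i j) := by
  rw [Matrix.mul_apply]
  exact val.map_le_sum fun k _ => le_mul_of_le val (hA i k) (hB k j)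

lemma le_mulVec {A : Matrix (Fin n) (Fin n) K} {v : Fin n → K} {p q : WithTop ℤ}
    (hA : ∀ i j, p ≤ val (A i j)) (hv : ∀ i, q ≤ val (v i)) (i : Fin n) :
    p + q ≤ val (A.mulVec v i) := by
  rw [Matrix.mulVec_eq_sum, Finset.sum_apply]
  refine val.map_le_sum fun k _ => ?_
  simpa [mul_comm] using le_mul_of_le val (hA i k) (hv k)

lemma det_integral {A : Matrix (Fin n) (Fin n) K} (hA : ∀ i j, 0 ≤ val (A i j)) :
    0 ≤ val A.det := by
  rw [Matrix.det_apply]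
  refine val.map_le_sum fun σ _ => ?_
  have h : 0 ≤ val (∏ i, A (σ i) i) :=
    Finset.prod_induction _ (fun x => 0 ≤ val x)
      (fun x y hx hy => by simpa using le_mul_of_le val hx hy) (by simp) fun i _ => hA _ _
  rcases Int.units_eq_one_or (Equiv.Perm.sign σ) with hs | hs <;> simpa [hs] using h

/-- An integral matrix with unit determinant has an integral inverse, by Cramer's rule. -/
lemma inv_integral {A : Matrix (Fin n) (Fin n) K} (hA : ∀ i j, 0 ≤ val (A i j))
    (hdet : val A.det = 0) (i j : Fin n) : 0 ≤ val (A⁻¹ i j) := by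
  have hd : val (A.det)⁻¹ = 0 := by
    have h0 : A.det ≠ 0 := by
      intro h; simp [h] at hdet
    have h := val.map_mul A.det (A.det)⁻¹
    rw [mul_inv_cancel₀ h0, val.map_one, hdet, zero_add] at h
    exact h.symm
  rw [Matrix.inv_def, Ring.inverse_eq_inv', Matrix.smul_apply, smul_eq_mul, val.map_mul, hd,
    zero_add, Matrix.adjugate_apply]
  refine det_integral val fun r s => ?_
  rw [Matrix.updateRow_apply]
  split_ifs
  · rw [Pi.single_apply]
    split_ifs <;> simp
  · exact hA r s

lemma val_zpow {π : K} (hπ : val π = 1) (k : ℤ) : val (π ^ k) = ((k : ℤ) : WithTop ℤ) := by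
  have h0 : π ≠ 0 := by
    intro h; simp [h] at hπ
  have hnat : ∀ m : ℕ, val (π ^ m) = (((m : ℕ) : ℤ) : WithTop ℤ) := by
    intro m
    rw [val.map_pow, hπ]
    simp
  obtain ⟨m, rfl | rfl⟩ := k.eq_nat_or_neg
  · rw [zpow_natCast, hnat]
  · have h := val.map_mul (π ^ m) (π ^ (-(m : ℤ)))
    rw [← zpow_natCast, ← zpow_add₀ h0, add_neg_cancel, zpow_zero, val.map_one,
      zpow_natCast, hnat] at h
    generalize val (π ^ (-(m : ℤ))) = t at h ⊢
    cases t with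
    | top => simp at h
    | coe t =>
      have h' : (0 : ℤ) = (m : ℤ) + t := by exact_mod_cast h
      congr 1
      omega

lemma snfDiag_eq_diagonal (π : K) (a : ℕ → ℤ) :
    snfDiag π n n n a = Matrix.diagonal fun i : Fin n => π ^ a i := by
  ext i j
  simp [snfDiag, Matrix.diagonal_apply, Fin.ext_iff]

/-- The inverse of a matrix whose invariant factors all divide `π ^ c` has entries of valuation at
least `-c`. -/
lemma inv_le_of_snf {π : K} (hπ : val π = 1) {P Q : Matrix (Fin n) (Fin n) K}
    (hP : ∀ i j, 0 ≤ val (P i j)) (hPdet : val P.det = 0)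
    (hQ : ∀ i j, 0 ≤ val (Q i j)) (hQdet : val Q.det = 0)
    {a : ℕ → ℤ} {c : ℤ} (ha : ∀ i < n, a i ≤ c) (i j : Fin n) :
    ((-c : ℤ) : WithTop ℤ) ≤ val ((P * snfDiag π n n n a * Q)⁻¹ i j) := by
  have h0 : π ≠ 0 := by
    intro h; simp [h] at hπ
  have hD : (snfDiag π n n n a)⁻¹ = Matrix.diagonal fun i : Fin n => π ^ (-a i) := by
    rw [snfDiag_eq_diagonal]
    apply Matrix.inv_eq_right_inv
    rw [Matrix.diagonal_mul_diagonal, ← Matrix.diagonal_one]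
    congr 1
    ext i
    rw [← zpow_add₀ h0, add_neg_cancel, zpow_zero]
  have hDle : ∀ r s, ((-c : ℤ) : WithTop ℤ) ≤ val ((snfDiag π n n n a)⁻¹ r s) := by
    intro r s
    rw [hD, Matrix.diagonal_apply]
    split_ifs
    · rw [val_zpow val hπ]
      exact_mod_cast neg_le_neg (ha r r.2)
    · simp
  rw [Matrix.mul_inv_rev, Matrix.mul_inv_rev]
  simpa using le_matrix_mul val (inv_integral val hQ hQdet)
    (le_matrix_mul val hDle (inv_integral val hP hPdet)) i j

/-- Contraction principle: if `F` has entries of positive valuation, a solution of `v = w + F v`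
satisfies every lower bound that `w` satisfies. The bound `⊤` is allowed, and gives `v = 0` when
`w = 0`. -/
lemma le_of_eq_add_mulVec {F : Matrix (Fin n) (Fin n) K} {v w : Fin n → K} {m : WithTop ℤ}
    {d : ℤ} (hd : 0 < d) (hF : ∀ i j, (d : WithTop ℤ) ≤ val (F i j))
    (hw : ∀ i, m ≤ val (w i)) (hv : v = w + F.mulVec v) (i : Fin n) : m ≤ val (v i) := by
  -- It suffices to bound a coordinate of least valuation.
  obtain ⟨k, -, hk⟩ := Finset.exists_min_image Finset.univ (fun i => val (v i))
    ⟨i, Finset.mem_univ i⟩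
  have hk' : ∀ j, val (v k) ≤ val (v j) := fun j => hk j (Finset.mem_univ j)
  refine le_trans ?_ (hk' i)
  by_contra! hlt
  have h1 := le_mulVec val hF hk' k
  have h2 : val (v k) < d + val (v k) := by
    generalize val (v k) = t at hlt
    cases t with
    | top => simp at hlt
    | coe t => exact_mod_cast (by omega : t < d + t)
  have h3 : val (v k) < val (w k + F.mulVec v k) :=
    val.map_lt_add (hlt.trans_le (hw k)) (h2.trans_le h1)
  rw [← Pi.add_apply, ← hv] at h3
  exact lt_irrefl _ h3

end Aux


/-- Let `M ∈ M_n(O_K)` be invertible over `K`, with invariant factors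
`a_1 ≤ ⋯ ≤ a_n` and `c = a_n = cond M`, let `l > 2c`, let `E ∈ M_n(K)` have all
entries of valuation at least `l`, and let `Y, Y' ∈ O_K^n` with
`val (Y_i - Y'_i) ≥ l` for every `i`.  Then `M + E` is invertible and the
solutions `X = M⁻¹ Y` and `X' = (M + E)⁻¹ Y'` of the linear systems `M X = Y`
and `(M + E) X' = Y'` satisfy `val (X_i - X'_i) ≥ l - 2c` for every `i`. -/
theorem linear_system_perturbation {K : Type} [Field K]
    (val : AddValuation K (WithTop ℤ)) (hval : Function.Surjective val)
    (π : K) (hπ : val π = 1)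
    {n : ℕ} (hn : 0 < n)
    (M P Q : Matrix (Fin n) (Fin n) K)
    (hMint : ∀ i j, 0 ≤ val (M i j))
    (hMinv : M.det ≠ 0)
    (hP : ∀ i j, 0 ≤ val (P i j)) (hPdet : val P.det = 0)
    (hQ : ∀ i j, 0 ≤ val (Q i j)) (hQdet : val Q.det = 0)
    (a : ℕ → ℤ) (ha : ∀ i j : ℕ, i ≤ j → j < n → a i ≤ a j)
    (hM : M = P * snfDiag π n n n a * Q)
    (l : ℤ) (hl : 2 * a (n - 1) < l)
    (E : Matrix (Fin n) (Fin n) K)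
    (hE : ∀ i j, ((l : ℤ) : WithTop ℤ) ≤ val (E i j))
    (Y Y' : Fin n → K)
    (hY : ∀ i, 0 ≤ val (Y i)) (hY' : ∀ i, 0 ≤ val (Y' i))
    (hYY' : ∀ i, ((l : ℤ) : WithTop ℤ) ≤ val (Y i - Y' i)) :
    (M + E).det ≠ 0 ∧
      ∀ i, ((l - 2 * a (n - 1) : ℤ) : WithTop ℤ) ≤
        val ((M⁻¹.mulVec Y - (M + E)⁻¹.mulVec Y') i) := by
  set c := a (n - 1) with hc
  have hac : ∀ i < n, a i ≤ c := fun i hi => ha i (n - 1) (by omega) (by omega)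
  have hMi : ∀ i j, ((-c : ℤ) : WithTop ℤ) ≤ val (M⁻¹ i j) := by
    rw [hM]; exact inv_le_of_snf val hπ hP hPdet hQ hQdet hac
  have hMu : IsUnit M.det := isUnit_iff_ne_zero.mpr hMinv
  have hc0 : 0 ≤ c := by
    have h := le_matrix_mul val hMint hMi ⟨0, hn⟩ ⟨0, hn⟩
    rw [Matrix.mul_nonsing_inv M hMu, Matrix.one_apply_eq, val.map_one, zero_add] at h
    have h' : -c ≤ 0 := by exact_mod_cast h
    omega
  have hd : 0 < -c + l := by omega
  have hF : ∀ i j, ((-c + l : ℤ) : WithTop ℤ) ≤ val ((-(M⁻¹ * E)) i j) := by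
    intro i j
    rw [Matrix.neg_apply, val.map_neg]
    exact_mod_cast le_matrix_mul val hMi hE i j
  -- The system `(M + E) v = y` in fixed-point form.
  have hfix : ∀ v y : Fin n → K, (M + E).mulVec v = y →
      v = M⁻¹.mulVec y + (-(M⁻¹ * E)).mulVec v := by
    rintro v y rfl
    rw [Matrix.mulVec_mulVec, Matrix.mul_add, Matrix.nonsing_inv_mul M hMu, ← Matrix.add_mulVec,
      add_neg_cancel_right, Matrix.one_mulVec]
  have hdet : (M + E).det ≠ 0 := by
    intro h0
    obtain ⟨v, hv0, hv⟩ := Matrix.exists_mulVec_eq_zero_iff.mpr h0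
    refine hv0 (funext fun i => ?_)
    have h := le_of_eq_add_mulVec val (m := ⊤) (w := M⁻¹.mulVec 0) hd hF (by simp)
      (hfix v 0 hv) i
    exact val.top_iff.mp (top_le_iff.mp h)
  refine ⟨hdet, fun i => ?_⟩
  set X' := (M + E)⁻¹.mulVec Y' with hX'
  have hsol : (M + E).mulVec X' = Y' := by
    rw [hX', Matrix.mulVec_mulVec, Matrix.mul_nonsing_inv _ (isUnit_iff_ne_zero.mpr hdet),
      Matrix.one_mulVec]
  have hX'le : ∀ i, ((-c : ℤ) : WithTop ℤ) ≤ val (X' i) :=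
    le_of_eq_add_mulVec val hd hF
      (fun i => by simpa using le_mulVec val hMi hY' i) (hfix X' Y' hsol)
  have hdiff : M⁻¹.mulVec Y - X' =
      M⁻¹.mulVec (Y - Y') - (-(M⁻¹ * E)).mulVec X' := by
    conv_lhs => rw [hfix X' Y' hsol]
    rw [Matrix.mulVec_sub, sub_sub]
  rw [hdiff, Pi.sub_apply]
  have h1 := le_mulVec val hMi (v := Y - Y') hYY' i
  have h2 := le_mulVec val hF hX'le i
  refine val.map_le_sub (le_trans ?_ h1) (le_trans ?_ h2)
  · exact_mod_cast (by omega : l - 2 * c ≤ -c + l)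
  · exact_mod_cast (by omega : l - 2 * c ≤ -c + l + -c)
end
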